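/- Let Σ be a finite nonempty alphabet and f : Σ* \ {ε} → ℤ. Define the relation ≡_f on nonempty words by: w ≡_f v if and only if for all u ∈ Σ*, f(wu) − f(w) = f(vu) − f(v). Then there exists a DWA A over Σ with f(w) = A(w) for every nonempty word w if and only if ≡_f has finitely many equivalence classes. -/

import Mathlib

/-- A deterministic weighted automaton (DWA) over alphabet `A` with state space `Q`. -/
structure DWA (A : Type) (Q : Type) where
  init : Q
  δ : Q → A → Q
  c : Q → A → ℤ

/-- The extended transition function `δ̂`. -/
def DWA.run {A Q : Type} (M : DWA A Q) (q : Q) (w : List A) : Q :=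
  w.foldl M.δ q

/-- The accumulated weight of the run on `w` starting in state `q`. -/
def DWA.valFrom {A Q : Type} (M : DWA A Q) : Q → List A → ℤ
  | _, [] => 0
  | q, x :: w => M.c q x + M.valFrom (M.δ q x) w

/-- The value `A(w)` of a word: the sum of the weights along the run from the initial state. -/
def DWA.val {A Q : Type} (M : DWA A Q) (w : List A) : ℤ :=
  M.valFrom M.init w

/-!
A state `q` of a DWA determines the increments `u ↦ f (wu) - f w` after any nonempty word `w`
leading to `q`, so `≡_f` has at most as many classes as there are states. Conversely, the increment
functions themselves are the states of an automaton for `f`: reading `x` in the state `g` costs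
`g [x]` and leads to the state `u ↦ g (xu) - g [x]`, so the weights telescope. Since `f` need not
vanish at the empty word but a DWA does, `f` is first changed to `0` there.
-/

section Increment

variable {A G : Type*} [AddGroup G]

/-- The increment `f (wu) - f w` of `f` when `w` is extended by `u`. As a function of `u` it plays
the role of the left quotient by `w` in the Myhill–Nerode theorem. -/
def increment (f : List A → G) (w u : List A) : G :=
  f (w ++ u) - f w

theorem increment_apply_nil (f : List A → G) (w : List A) : increment f w [] = 0 := by
  simp [increment]

theorem increment_increment (f : List A → G) (w v : List A) :
    increment (increment f w) v = increment f (w ++ v) := by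
  ext u
  simp [increment]

theorem increment_congr {f g : List A → G} (hfg : ∀ w ≠ [], f w = g w) {w : List A} (hw : w ≠ []) :
    increment f w = increment g w := by
  ext u
  rw [increment, increment, hfg w hw, hfg (w ++ u) (List.append_ne_nil_of_left_ne_nil hw u)]

theorem finite_range_increment_of_finite_image {f : List A → G}
    (hf : (increment f '' {[]}ᶜ).Finite) : (Set.range (increment f)).Finite := by
  rw [← Set.image_univ, ← Set.union_compl_self {[]}, Set.image_union]
  exact ((Set.finite_singleton _).image _).union hf

/-- The relation `≡_f` on nonempty words. -/
def nerodeSetoid (f : List A → G) : Setoid {w : List A // w ≠ []} where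
  r w v := ∀ u, increment f w u = increment f v u
  iseqv := ⟨fun _ _ => rfl, fun h u => (h u).symm, fun h k u => (h u).trans (k u)⟩

theorem finite_quotient_nerodeSetoid_iff (f : List A → G) :
    Finite (Quotient (nerodeSetoid f)) ↔ (increment f '' {[]}ᶜ).Finite := by
  have hker : nerodeSetoid f = Setoid.ker fun w : {w : List A // w ≠ []} => increment f w :=
    Setoid.ext fun _ _ => funext_iff.symm
  rw [hker, (Setoid.quotientKerEquivRange _).finite_iff, Set.image_eq_range]
  rfl

end Increment

theorem finite_quotient_iff_exists_finset {α : Type*} (s : Setoid α) :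
    Finite (Quotient s) ↔ ∃ S : Finset α, ∀ a, ∃ b ∈ S, s a b := by
  classical
  constructor
  · intro _
    have := Fintype.ofFinite (Quotient s)
    exact ⟨Finset.univ.image Quotient.out, fun a =>
      ⟨Quotient.out ⟦a⟧, Finset.mem_image_of_mem _ (Finset.mem_univ _), s.symm (Quotient.mk_out a)⟩⟩
  · rintro ⟨S, hS⟩
    refine Finite.of_surjective (fun b : S => (⟦b.1⟧ : Quotient s)) (Quotient.ind fun a => ?_)
    obtain ⟨b, hbS, hab⟩ := hS a
    exact ⟨⟨b, hbS⟩, Quotient.sound (s.symm hab)⟩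

namespace DWA

variable {A Q : Type}

theorem valFrom_append (M : DWA A Q) (q : Q) (w u : List A) :
    M.valFrom q (w ++ u) = M.valFrom q w + M.valFrom (M.run q w) u := by
  induction w generalizing q with
  | nil => simp [valFrom, run]
  | cons x w ih => simp [valFrom, run, ih, add_assoc]

theorem increment_val (M : DWA A Q) (w : List A) :
    increment M.val w = M.valFrom (M.run M.init w) := by
  ext u
  simp [increment, val, valFrom_append]

/-- The automaton whose states are the functions `increment f w`. It computes `f` up to the constant
`f []`, since every DWA has value `0` at the empty word. -/
def ofIncrements (f : List A → ℤ) : DWA A (Set.range (increment f)) where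
  init := ⟨increment f [], Set.mem_range_self []⟩
  δ g x := ⟨increment g.1 [x], by
    obtain ⟨_, w, rfl⟩ := g
    exact ⟨w ++ [x], (increment_increment f w [x]).symm⟩⟩
  c g x := g.1 [x]

theorem valFrom_ofIncrements (f : List A → ℤ) (g : Set.range (increment f)) (u : List A) :
    (ofIncrements f).valFrom g u = g.1 u := by
  induction u generalizing g with
  | nil =>
    obtain ⟨_, w, rfl⟩ := g
    exact (increment_apply_nil f w).symm
  | cons x u ih =>
    calc (ofIncrements f).valFrom g (x :: u)
        = g.1 [x] + increment g.1 [x] u := congrArg (g.1 [x] + ·) (ih _)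
      _ = g.1 (x :: u) := add_sub_cancel _ _

theorem val_ofIncrements (f : List A → ℤ) (w : List A) : (ofIncrements f).val w = f w - f [] :=
  valFrom_ofIncrements f _ w

theorem finite_image_increment [Finite Q] {M : DWA A Q} {f : List A → ℤ}
    (hM : ∀ w ≠ [], M.val w = f w) : (increment f '' {[]}ᶜ).Finite := by
  refine (Set.finite_range M.valFrom).subset ?_
  rintro _ ⟨w, hw, rfl⟩
  exact ⟨M.run M.init w, by rw [← increment_val, increment_congr hM hw]⟩

theorem exists_val_eq_of_finite_image_increment {f : List A → ℤ}
    (hf : (increment f '' {[]}ᶜ).Finite) :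
    ∃ (Q : Type) (_ : Fintype Q) (M : DWA A Q), ∀ w ≠ [], M.val w = f w := by
  classical
  let f₀ := Function.update f [] 0
  have hnil : f₀ [] = 0 := Function.update_self [] 0 f
  have hf₀ : ∀ w ≠ [], f₀ w = f w := fun w hw => Function.update_of_ne hw 0 f
  have hfin : (Set.range (increment f₀)).Finite := by
    have himage : increment f₀ '' {[]}ᶜ = increment f '' {[]}ᶜ :=
      Set.image_congr fun _ hw => increment_congr hf₀ hw
    exact finite_range_increment_of_finite_image (himage ▸ hf)
  refine ⟨_, hfin.fintype, ofIncrements f₀, fun w hw => ?_⟩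
  rw [val_ofIncrements, hf₀ w hw, hnil, sub_zero]

end DWA

theorem dwa_myhill_nerode_general {A : Type} (f : List A → ℤ) :
    (∃ (Q : Type) (_ : Fintype Q) (M : DWA A Q), ∀ w : List A, w ≠ [] → M.val w = f w) ↔
      Finite (Quotient (nerodeSetoid f)) := by
  rw [finite_quotient_nerodeSetoid_iff]
  constructor
  · rintro ⟨Q, _, M, hM⟩
    exact DWA.finite_image_increment hM
  · exact DWA.exists_val_eq_of_finite_image_increment

/-- Myhill–Nerode counterpart for DWA: a function `f` on nonempty words is
computed by some (finite-state) DWA iff the right congruence `≡_f`, defined on nonempty words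
by `w ≡_f v ↔ ∀ u, f(wu) - f(w) = f(vu) - f(v)`, has finitely many equivalence classes
(expressed by the existence of a finite set of representatives meeting every class). -/
theorem dwa_myhill_nerode (A : Type) [Fintype A] (f : List A → ℤ) :
    let rel : {w : List A // w ≠ []} → {w : List A // w ≠ []} → Prop := fun w v =>
      ∀ u : List A, f (w.val ++ u) - f w.val = f (v.val ++ u) - f v.val
    ((∃ (Q : Type) (_ : Fintype Q) (M : DWA A Q),
        ∀ w : List A, w ≠ [] → M.val w = f w) ↔
      ∃ S : Finset {w : List A // w ≠ []}, ∀ w : {w : List A // w ≠ []}, ∃ v ∈ S, rel w v) := by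
  intro rel
  exact (dwa_myhill_nerode_general f).trans (finite_quotient_iff_exists_finset (nerodeSetoid f))
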